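/- Let Λ₋, Λ₊ : ℝ → ℝ be C² functions with Λ₋(ζ) < Λ₊(ζ), Λ₋'(ζ) < 0 and Λ₊'(ζ) < 0 for all ζ, let b : ℝ → ℝ be a C¹ function with Λ₊(b(α)) = Λ₋(α) for all α, and suppose α₀ < β₀ := b(α₀) satisfy Λ₋(α₀) = Λ₊(β₀) = 0, f(α₀) = 0 and f'(α₀) < 0. Then there exists ε > 0 such that: for all α ∈ (α₀ − ε, α₀), f(α) > 0 and Λ₊(b(α)) > 0, so that d/dα[t(α,b(α))] < 0 and d/dα[x(α,b(α))] < 0; and for all α ∈ (α₀, α₀ + ε), f(α) < 0 and Λ₊(b(α)) < 0, so that d/dα[t(α,b(α))] > 0 and d/dα[x(α,b(α))] < 0. In particular, along the image curve, the left branch Γ_l is increasing in x and the right branch Γ_r is decreasing in x. -/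

import Mathlib

/-!
Write `t(α) = t(α, b α)`, `x(α) = x(α, b α)` for the image of the singular curve. Differentiating
`Λ₊ ∘ b = Λ₋` gives `b'(α) Λ₊'(b α) = Λ₋'(α)`, so the fundamental theorem of calculus yields
`f(α) = Λ₊'(b α) t'(α)` (`ffun_eq_mul_deriv_tmap`) and `x'(α) = Λ₋(α) t'(α)`
(`hasDerivAt_xmap_curve`). As `Λ₊' < 0`, the sign of `t'` is opposite to that of `f`, and `f` changes
from positive to negative at `α₀` because `f(α₀) = 0 > f'(α₀)`. Since `Λ₋` is strictly decreasing
with `Λ₋(α₀) = 0`, the product `Λ₋ t'` is negative on both sides of `α₀`.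
-/

/-- The time component of the hodograph map. -/
noncomputable def tmap (Λm Λp : ℝ → ℝ) (α β : ℝ) : ℝ :=
  ∫ ζ in α..β, 1 / (Λp ζ - Λm ζ)

/-- The space component of the hodograph map. -/
noncomputable def xmap (Λm Λp : ℝ → ℝ) (α β : ℝ) : ℝ :=
  (1 / 2) * (α + β + ∫ ζ in α..β, (Λp ζ + Λm ζ) / (Λp ζ - Λm ζ))

/-- The function `f` of assumption (H4). -/
noncomputable def ffun (Λm Λp b : ℝ → ℝ) (α : ℝ) : ℝ :=
  deriv Λm α / (Λp (b α) - Λm (b α)) - deriv Λp (b α) / (Λp α - Λm α)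

/-- Leibniz rule for an integral whose lower limit is the parameter itself. -/
theorem hasDerivAt_integral_curve {g b : ℝ → ℝ} (hg : Continuous g) {α b' : ℝ}
    (hb : HasDerivAt b b' α) :
    HasDerivAt (fun a => ∫ ζ in a..b a, g ζ) (g (b α) * b' - g α) α := by
  have hprim : ∀ u, HasDerivAt (fun v => ∫ ζ in (0 : ℝ)..v, g ζ) (g u) u := fun u =>
    intervalIntegral.integral_hasDerivAt_right (hg.intervalIntegrable _ _)
      hg.aestronglyMeasurable.stronglyMeasurableAtFilter hg.continuousAt
  have heq : (fun a => ∫ ζ in a..b a, g ζ) =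
      fun a => (∫ ζ in (0 : ℝ)..b a, g ζ) - ∫ ζ in (0 : ℝ)..a, g ζ := by
    funext a
    exact (intervalIntegral.integral_interval_sub_left (hg.intervalIntegrable _ _)
      (hg.intervalIntegrable _ _)).symm
  rw [heq]
  exact ((hprim (b α)).comp α hb).sub (hprim α)

theorem hasDerivAt_tmap_curve {Λm Λp b : ℝ → ℝ} (hm : Continuous Λm) (hp : Continuous Λp)
    (hlt : ∀ ζ, Λm ζ < Λp ζ) {α b' : ℝ} (hb : HasDerivAt b b' α) :
    HasDerivAt (fun a => tmap Λm Λp a (b a))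
      (1 / (Λp (b α) - Λm (b α)) * b' - 1 / (Λp α - Λm α)) α :=
  hasDerivAt_integral_curve (g := fun ζ => 1 / (Λp ζ - Λm ζ))
    (continuous_const.div (hp.sub hm) fun ζ => (sub_pos.2 (hlt ζ)).ne') hb

/-- Along the singular curve, `dx/dα = Λ₋(α) dt/dα`: both endpoint contributions to `dx/dα` carry
the common factor `Λ₊(b α) = Λ₋(α)`. -/
theorem hasDerivAt_xmap_curve {Λm Λp b : ℝ → ℝ} (hm : Continuous Λm) (hp : Continuous Λp)
    (hlt : ∀ ζ, Λm ζ < Λp ζ) (hcomp : ∀ α, Λp (b α) = Λm α) {α b' : ℝ}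
    (hb : HasDerivAt b b' α) :
    HasDerivAt (fun a => xmap Λm Λp a (b a))
      (Λm α * (1 / (Λp (b α) - Λm (b α)) * b' - 1 / (Λp α - Λm α))) α := by
  have hI := hasDerivAt_integral_curve (g := fun ζ => (Λp ζ + Λm ζ) / (Λp ζ - Λm ζ))
    ((hp.add hm).div (hp.sub hm) fun ζ => (sub_pos.2 (hlt ζ)).ne') hb
  have hx := (((hasDerivAt_id α).add hb).add hI).const_mul (1 / 2)
  have h1 := (sub_pos.2 (hlt α)).ne'
  have h2 := (sub_pos.2 (hlt (b α))).ne'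
  have hval : 1 / 2 * (1 + b' + ((Λp (b α) + Λm (b α)) / (Λp (b α) - Λm (b α)) * b' -
      (Λp α + Λm α) / (Λp α - Λm α))) =
      Λm α * (1 / (Λp (b α) - Λm (b α)) * b' - 1 / (Λp α - Λm α)) := by
    rw [hcomp α] at h2 ⊢
    field_simp
    ring
  rw [← hval]
  exact hx

/-- On the singular curve `f = Λ₊'(b α) dt/dα`, which follows from `b' Λ₊'(b α) = Λ₋'(α)`. -/
theorem ffun_eq_mul_deriv_tmap {Λm Λp b : ℝ → ℝ} (hp : Differentiable ℝ Λp)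
    (hcomp : ∀ α, Λp (b α) = Λm α) {α b' : ℝ} (hb : HasDerivAt b b' α) :
    ffun Λm Λp b α =
      deriv Λp (b α) * (1 / (Λp (b α) - Λm (b α)) * b' - 1 / (Λp α - Λm α)) := by
  have hcurve : deriv Λm α = deriv Λp (b α) * b' := by
    have h := (hp (b α)).hasDerivAt.comp α hb
    have he : Λp ∘ b = Λm := funext hcomp
    rw [he] at h
    exact h.deriv
  rw [ffun, hcurve]
  ring

/-- A real function vanishing at `c` with negative derivative there is positive just to the left
of `c` and negative just to the right. -/
theorem exists_sign_change_of_deriv_neg {g : ℝ → ℝ} {c : ℝ} (h0 : g c = 0)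
    (hd : deriv g c < 0) :
    ∃ ε > 0, (∀ x ∈ Set.Ioo (c - ε) c, 0 < g x) ∧ ∀ x ∈ Set.Ioo c (c + ε), g x < 0 := by
  obtain ⟨ε, hε, hball⟩ :=
    Metric.eventually_nhds_iff.1 (eventually_nhdsWithin_sign_eq_of_deriv_neg hd h0)
  refine ⟨ε, hε, fun x hx => ?_, fun x hx => ?_⟩
  · have h := hball (y := x) (by rw [Real.dist_eq, abs_lt]; constructor <;> linarith [hx.1, hx.2])
    rwa [sign_pos (sub_pos.2 hx.2), sign_eq_one_iff] at h
  · have h := hball (y := x) (by rw [Real.dist_eq, abs_lt]; constructor <;> linarith [hx.1, hx.2])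
    rwa [sign_neg (sub_neg.2 hx.1), sign_eq_neg_one_iff] at h

/-- Under assumptions (H1)–(H5), there is `ε > 0` such that on
`(α₀ − ε, α₀)` one has `f > 0`, `Λ₊∘b > 0`, and both `d/dα t(α,b(α)) < 0`
and `d/dα x(α,b(α)) < 0` (so the left branch `Γ_l` is increasing in `x`),
while on `(α₀, α₀ + ε)` one has `f < 0`, `Λ₊∘b < 0`,
`d/dα t(α,b(α)) > 0` and `d/dα x(α,b(α)) < 0` (so the right branch `Γ_r`
is decreasing in `x`). -/
theorem branches_monotonicity
    (Λm Λp b : ℝ → ℝ)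
    (hm : ContDiff ℝ 2 Λm) (hp : ContDiff ℝ 2 Λp) (hb : ContDiff ℝ 1 b)
    (hlt : ∀ ζ : ℝ, Λm ζ < Λp ζ)
    (hm' : ∀ ζ : ℝ, deriv Λm ζ < 0) (hp' : ∀ ζ : ℝ, deriv Λp ζ < 0)
    (hcomp : ∀ α : ℝ, Λp (b α) = Λm α)
    (α₀ β₀ : ℝ) (hβ : b α₀ = β₀) (hαβ : α₀ < β₀)
    (hm0 : Λm α₀ = 0) (hp0 : Λp β₀ = 0)
    (hf0 : ffun Λm Λp b α₀ = 0)
    (hf' : deriv (ffun Λm Λp b) α₀ < 0) :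
    ∃ ε > 0,
      (∀ α ∈ Set.Ioo (α₀ - ε) α₀,
        0 < ffun Λm Λp b α ∧ 0 < Λp (b α) ∧
        deriv (fun a => tmap Λm Λp a (b a)) α < 0 ∧
        deriv (fun a => xmap Λm Λp a (b a)) α < 0) ∧
      (∀ α ∈ Set.Ioo α₀ (α₀ + ε),
        ffun Λm Λp b α < 0 ∧ Λp (b α) < 0 ∧
        0 < deriv (fun a => tmap Λm Λp a (b a)) α ∧
        deriv (fun a => xmap Λm Λp a (b a)) α < 0) := by
  obtain ⟨ε, hε, hl, hr⟩ := exists_sign_change_of_deriv_neg hf0 hf'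
  have hanti : StrictAnti Λm := strictAnti_of_deriv_neg hm'
  have hbd : ∀ α, HasDerivAt b (deriv b α) α := fun α =>
    (hb.differentiable one_ne_zero α).hasDerivAt
  have hf : ∀ α, ffun Λm Λp b α =
      deriv Λp (b α) * deriv (fun a => tmap Λm Λp a (b a)) α := fun α => by
    rw [(hasDerivAt_tmap_curve hm.continuous hp.continuous hlt (hbd α)).deriv]
    exact ffun_eq_mul_deriv_tmap (hp.differentiable two_ne_zero) hcomp (hbd α)
  have hx : ∀ α, deriv (fun a => xmap Λm Λp a (b a)) α =
      Λm α * deriv (fun a => tmap Λm Λp a (b a)) α := fun α => by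
    rw [(hasDerivAt_tmap_curve hm.continuous hp.continuous hlt (hbd α)).deriv]
    exact (hasDerivAt_xmap_curve hm.continuous hp.continuous hlt hcomp (hbd α)).deriv
  refine ⟨ε, hε, fun α hα => ?_, fun α hα => ?_⟩
  · have hfα := hl α hα
    have hmα : 0 < Λm α := hm0 ▸ hanti hα.2
    have ht : deriv (fun a => tmap Λm Λp a (b a)) α < 0 :=
      neg_of_mul_pos_right (hf α ▸ hfα) (hp' (b α)).le
    exact ⟨hfα, (hcomp α).symm ▸ hmα, ht, hx α ▸ mul_neg_of_pos_of_neg hmα ht⟩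
  · have hfα := hr α hα
    have hmα : Λm α < 0 := hm0 ▸ hanti hα.1
    have ht : 0 < deriv (fun a => tmap Λm Λp a (b a)) α :=
      pos_of_mul_neg_right (hf α ▸ hfα) (hp' (b α)).le
    exact ⟨hfα, (hcomp α).symm ▸ hmα, ht, hx α ▸ mul_neg_of_neg_of_pos hmα ht⟩
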